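/- Sub-cocycle property of the inter-domain correlation (Theorem 6.1, part (iii)). For any probability mass function p on Ω₀^W and any pairwise disjoint subsets A, C, D ⊆ W: TV(A|C ∪ D) ≤ TV(A|C) + TV_C(A|D). -/

import Mathlib

/-!
Statement 13 (Theorem 6.1, part (iii)): sub-cocycle property of the
inter-domain correlation.
-/

open scoped Classical

namespace Stmt13

variable {Ω₀ W : Type*} [Fintype Ω₀] [DecidableEq Ω₀] [Fintype W] [DecidableEq W]

/-- marginal `p(σ_S)`. -/
noncomputable def marg (p : (W → Ω₀) → ℝ) (S : Finset W)
    (σS : {x // x ∈ S} → Ω₀) : ℝ :=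
  ∑ σ : W → Ω₀, if (fun x : {x // x ∈ S} => σ x.1) = σS then p σ else 0

/-- joint marginal `p(σ_S, σ_T)`. -/
noncomputable def marg2 (p : (W → Ω₀) → ℝ) (S T : Finset W)
    (σS : {x // x ∈ S} → Ω₀) (σT : {x // x ∈ T} → Ω₀) : ℝ :=
  ∑ σ : W → Ω₀,
    if (fun x : {x // x ∈ S} => σ x.1) = σS ∧ (fun x : {x // x ∈ T} => σ x.1) = σT
    then p σ else 0

/-- triple joint marginal `p(σ_S, σ_T, σ_U)`. -/
noncomputable def marg3 (p : (W → Ω₀) → ℝ) (S T U : Finset W)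
    (σS : {x // x ∈ S} → Ω₀) (σT : {x // x ∈ T} → Ω₀) (σU : {x // x ∈ U} → Ω₀) : ℝ :=
  ∑ σ : W → Ω₀,
    if (fun x : {x // x ∈ S} => σ x.1) = σS ∧ (fun x : {x // x ∈ T} => σ x.1) = σT ∧
        (fun x : {x // x ∈ U} => σ x.1) = σU
    then p σ else 0

/-- the inter-domain correlation `TV(A|C)`. -/
noncomputable def TVpair (p : (W → Ω₀) → ℝ) (A C : Finset W) : ℝ :=
  (1 / 2) * ∑ σA : {x // x ∈ A} → Ω₀, ∑ σC : {x // x ∈ C} → Ω₀,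
    |marg2 p A C σA σC - marg p A σA * marg p C σC|

/-- the conditioned inter-domain correlation `TV_B(A|C)`; terms with vanishing
marginals drop out (conditional probabilities use the `x/0 = 0` convention). -/
noncomputable def TVcond (p : (W → Ω₀) → ℝ) (A B C : Finset W) : ℝ :=
  ∑ σB : {x // x ∈ B} → Ω₀, ∑ σC : {x // x ∈ C} → Ω₀, marg2 p B C σB σC *
    ∑ σA : {x // x ∈ A} → Ω₀,
      max (marg3 p A B C σA σB σC / marg2 p B C σB σC
            - marg2 p A B σA σB / marg p B σB) 0

/-!
The distance from `p(σ_C, σ_D) p(σ_A)` to `p(σ_A, σ_C, σ_D)` is estimated, for each fixed `σ_C` and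
`σ_D`, by the triangle inequality through `p(σ_C, σ_D) p(σ_A|σ_C)`. The first leg is the fraction
`p(σ_D|σ_C)` of the contribution of `σ_C` to `TV(A|C)`, and these fractions add up to at most one
over `σ_D`. The two ends of the second leg have the same mass in `σ_A`, so half their `ℓ¹` distance
is a sum of positive parts, namely the contribution of `σ_C` and `σ_D` to `TV_C(A|D)`.
-/

section TotalVariation

variable {α β : Type*} [Fintype α]

/-- The total variation distance between two real weights on a finite type, normalised as half the
`ℓ¹` distance; no positivity or total mass is assumed, so that it applies to unnormalised slices
of a joint distribution. -/
noncomputable def tvDist (f g : α → ℝ) : ℝ :=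
  (1 / 2) * ∑ a, |f a - g a|

lemma tvDist_nonneg (f g : α → ℝ) : 0 ≤ tvDist f g := by
  unfold tvDist
  positivity

lemma tvDist_triangle (f g h : α → ℝ) : tvDist f h ≤ tvDist f g + tvDist g h := by
  simp only [tvDist, ← mul_add, ← Finset.sum_add_distrib]
  gcongr
  exact abs_sub_le _ _ _

lemma tvDist_smul (c : ℝ) (f g : α → ℝ) : tvDist (c • f) (c • g) = |c| * tvDist f g := by
  simp only [tvDist, Pi.smul_apply, smul_eq_mul, ← mul_sub, abs_mul, ← Finset.mul_sum]
  ring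

lemma tvDist_eq_sum_max_zero {f g : α → ℝ} (h : ∑ a, f a = ∑ a, g a) :
    tvDist f g = ∑ a, max (f a - g a) 0 := by
  have abs_eq (t : ℝ) : |t| = 2 * max t 0 - t := by
    linarith [max_zero_add_max_neg_zero_eq_abs_self t, max_zero_sub_max_neg_zero_eq_self t]
  have sum_sub : ∑ a, (f a - g a) = 0 := by rw [Finset.sum_sub_distrib, h, sub_self]
  simp only [tvDist, abs_eq]
  rw [Finset.sum_sub_distrib, sum_sub, ← Finset.mul_sum]
  ring

lemma tvDist_smul_le {f g : α → ℝ} {q r : ℝ} (hq : 0 < q) (hr : 0 < r)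
    (hf : ∑ a, f a = q) (hg : ∑ a, g a = r) (m : α → ℝ) :
    tvDist f (q • m) ≤
      q / r * tvDist g (r • m) + q * ∑ a, max (f a / q - g a / r) 0 := by
  have normalise_f : f = q • fun a => f a / q := by
    ext a
    simp only [Pi.smul_apply, smul_eq_mul]
    field_simp
  have normalise_g : (q / r) • g = q • fun a => g a / r := by
    ext a
    simp only [Pi.smul_apply, smul_eq_mul]
    ring
  have cancel_r : q • m = (q / r) • r • m := by
    rw [smul_smul, div_mul_cancel₀ _ hr.ne']
  have scaled : tvDist ((q / r) • g) (q • m) = q / r * tvDist g (r • m) := by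
    rw [cancel_r, tvDist_smul, abs_of_pos (div_pos hq hr)]
  have equal_mass : ∑ a, f a / q = ∑ a, g a / r := by
    rw [← Finset.sum_div, ← Finset.sum_div, hf, hg, div_self hq.ne', div_self hr.ne']
  have conditional : tvDist f ((q / r) • g) = q * ∑ a, max (f a / q - g a / r) 0 := by
    rw [normalise_g]
    conv_lhs => rw [normalise_f]
    rw [tvDist_smul, abs_of_pos hq, tvDist_eq_sum_max_zero equal_mass]
  linarith [tvDist_triangle f ((q / r) • g) (q • m)]

lemma sum_tvDist_smul_le [Fintype β] {f : α → β → ℝ} (hf : ∀ a b, 0 ≤ f a b)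
    {g : α → ℝ} {q : β → ℝ} {r : ℝ} (hq : ∀ b, ∑ a, f a b = q b) (hg : ∀ a, ∑ b, f a b = g a)
    (hr : ∑ a, g a = r) (m : α → ℝ) :
    ∑ b, tvDist (f · b) (q b • m) ≤
      tvDist g (r • m) + ∑ b, q b * ∑ a, max (f a b / q b - g a / r) 0 := by
  have q_nonneg (b : β) : 0 ≤ q b := hq b ▸ Finset.sum_nonneg fun a _ => hf a b
  have sum_q : ∑ b, q b = r := by
    simp only [← hr, ← hg, ← hq]
    exact Finset.sum_comm
  have slice (b : β) : tvDist (f · b) (q b • m) ≤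
      q b / r * tvDist g (r • m) + q b * ∑ a, max (f a b / q b - g a / r) 0 := by
    rcases (q_nonneg b).eq_or_lt with hb | hb
    · have f_eq_zero (a : α) : f a b = 0 :=
        congrFun
          ((Fintype.sum_eq_zero_iff_of_nonneg fun a => hf a b).mp ((hq b).trans hb.symm)) a
      simp [← hb, f_eq_zero, tvDist]
    · have r_pos : 0 < r :=
        hb.trans_le <| sum_q ▸ Finset.single_le_sum (fun b _ => q_nonneg b) (Finset.mem_univ b)
      exact tvDist_smul_le hb r_pos (hq b) hr m
  calc ∑ b, tvDist (f · b) (q b • m)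
    _ ≤ r / r * tvDist g (r • m) + ∑ b, q b * ∑ a, max (f a b / q b - g a / r) 0 := by
      rw [← sum_q, Finset.sum_div, Finset.sum_mul, ← Finset.sum_add_distrib, sum_q]
      exact Finset.sum_le_sum fun b _ => slice b
    _ ≤ tvDist g (r • m) + ∑ b, q b * ∑ a, max (f a b / q b - g a / r) 0 := by
      gcongr
      exact mul_le_of_le_one_left (tvDist_nonneg _ _) (div_self_le_one r)

end TotalVariation

lemma sum_comp_le_of_injective {α β R : Type*} [Fintype α] [Fintype β]
    [AddCommMonoid R] [PartialOrder R] [IsOrderedAddMonoid R]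
    {i : α → β} (hi : Function.Injective i) {f : β → R} (hf : ∀ b, 0 ≤ f b) :
    ∑ a, f (i a) ≤ ∑ b, f b :=
  (Finset.sum_map Finset.univ ⟨i, hi⟩ f).symm.trans_le (Finset.sum_le_univ_sum_of_nonneg hf)

lemma injective_restrict₂_union {ι : Type*} [DecidableEq ι] {π : ι → Type*} (S T : Finset ι) :
    Function.Injective fun e : (i : ↥(S ∪ T)) → π i =>
      (Finset.restrict₂ Finset.subset_union_left e,
        Finset.restrict₂ Finset.subset_union_right e) := by
  intro e e' h
  obtain ⟨left, right⟩ := Prod.mk.inj h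
  ext ⟨i, hi⟩
  rcases Finset.mem_union.mp hi with hS | hT
  · exact congrFun left ⟨i, hS⟩
  · exact congrFun right ⟨i, hT⟩

lemma restrict_union_eq_iff {ι : Type*} [DecidableEq ι] {π : ι → Type*} {S T : Finset ι}
    {σ : (i : ι) → π i} {e : (i : ↥(S ∪ T)) → π i} :
    (S ∪ T).restrict σ = e ↔
      S.restrict σ = Finset.restrict₂ Finset.subset_union_left e ∧
        T.restrict σ = Finset.restrict₂ Finset.subset_union_right e := by
  rw [← (injective_restrict₂_union S T).eq_iff, Prod.mk.injEq]
  rfl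

section Marginals

variable (p : (W → Ω₀) → ℝ) (S T U : Finset W)

lemma marg_union (e : ↥(S ∪ T) → Ω₀) :
    marg p (S ∪ T) e =
      marg2 p S T (Finset.restrict₂ (π := fun _ => Ω₀) Finset.subset_union_left e)
        (Finset.restrict₂ (π := fun _ => Ω₀) Finset.subset_union_right e) :=
  Finset.sum_congr rfl fun _ _ => if_congr restrict_union_eq_iff rfl rfl

lemma marg2_union (s : ↥S → Ω₀) (e : ↥(T ∪ U) → Ω₀) :
    marg2 p S (T ∪ U) s e =
      marg3 p S T U s (Finset.restrict₂ (π := fun _ => Ω₀) Finset.subset_union_left e)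
        (Finset.restrict₂ (π := fun _ => Ω₀) Finset.subset_union_right e) :=
  Finset.sum_congr rfl fun _ _ => if_congr (and_congr_right' restrict_union_eq_iff) rfl rfl

lemma marg3_nonneg {p : (W → Ω₀) → ℝ} (hp : ∀ σ, 0 ≤ p σ) (s : ↥S → Ω₀) (t : ↥T → Ω₀)
    (u : ↥U → Ω₀) : 0 ≤ marg3 p S T U s t u :=
  Finset.sum_nonneg fun σ _ => ite_nonneg (hp σ) le_rfl

lemma sum_marg2_left (t : ↥T → Ω₀) : ∑ s, marg2 p S T s t = marg p T t := by
  simp only [marg2, marg]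
  rw [Finset.sum_comm]
  simp only [ite_and, Finset.sum_ite_eq, Finset.mem_univ, if_true]

lemma sum_marg3_left (t : ↥T → Ω₀) (u : ↥U → Ω₀) :
    ∑ s, marg3 p S T U s t u = marg2 p T U t u := by
  simp only [marg3, marg2]
  rw [Finset.sum_comm]
  simp only [ite_and, Finset.sum_ite_eq, Finset.mem_univ, if_true]

lemma marg3_rotate (s : ↥S → Ω₀) (t : ↥T → Ω₀) (u : ↥U → Ω₀) :
    marg3 p S T U s t u = marg3 p U S T u s t :=
  Finset.sum_congr rfl fun _ _ => if_congr and_rotate.symm rfl rfl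

lemma sum_marg3_right (s : ↥S → Ω₀) (t : ↥T → Ω₀) :
    ∑ u, marg3 p S T U s t u = marg2 p S T s t := by
  rw [← sum_marg3_left p U S T s t]
  exact Finset.sum_congr rfl fun u _ => marg3_rotate p S T U s t u

end Marginals

lemma TVpair_eq_sum_tvDist (p : (W → Ω₀) → ℝ) (A C : Finset W) :
    TVpair p A C = ∑ c, tvDist (marg2 p A C · c) (marg p C c • marg p A) := by
  simp only [TVpair, tvDist, Pi.smul_apply, smul_eq_mul, mul_comm (marg p C _)]
  rw [Finset.sum_comm, Finset.mul_sum]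

lemma TVpair_union_le (p : (W → Ω₀) → ℝ) (A C D : Finset W) :
    TVpair p A (C ∪ D) ≤
      ∑ c, ∑ d, tvDist (marg3 p A C D · c d) (marg2 p C D c d • marg p A) := by
  simp only [TVpair_eq_sum_tvDist, marg_union, marg2_union]
  rw [← Fintype.sum_prod_type']
  exact sum_comp_le_of_injective (injective_restrict₂_union (π := fun _ => Ω₀) C D)
    (f := fun cd => tvDist (marg3 p A C D · cd.1 cd.2) (marg2 p C D cd.1 cd.2 • marg p A))
    fun _ => tvDist_nonneg _ _

theorem tv_subcocycle_general (p : (W → Ω₀) → ℝ) (hp0 : ∀ σ, 0 ≤ p σ) (A C D : Finset W) :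
    TVpair p A (C ∪ D) ≤ TVpair p A C + TVcond p A C D :=
  calc TVpair p A (C ∪ D)
    _ ≤ ∑ c, ∑ d, tvDist (marg3 p A C D · c d) (marg2 p C D c d • marg p A) :=
      TVpair_union_le p A C D
    _ ≤ ∑ c, (tvDist (marg2 p A C · c) (marg p C c • marg p A) +
          ∑ d, marg2 p C D c d *
            ∑ a, max (marg3 p A C D a c d / marg2 p C D c d - marg2 p A C a c / marg p C c) 0) :=
      Finset.sum_le_sum fun c _ => sum_tvDist_smul_le
        (fun a d => marg3_nonneg A C D hp0 a c d) (sum_marg3_left p A C D c)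
        (fun a => sum_marg3_right p A C D a c) (sum_marg2_left p A C c) (marg p A)
    _ = TVpair p A C + TVcond p A C D := by
      rw [Finset.sum_add_distrib, TVpair_eq_sum_tvDist, TVcond]

/-- **Theorem 6.1 (iii)**: `TV(A|C ∪ D) ≤ TV(A|C) + TV_C(A|D)`. -/
theorem tv_subcocycle (p : (W → Ω₀) → ℝ)
    (hp0 : ∀ σ, 0 ≤ p σ) (hp1 : ∑ σ : W → Ω₀, p σ = 1)
    (A C D : Finset W)
    (hAC : Disjoint A C) (hAD : Disjoint A D) (hCD : Disjoint C D) :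
    TVpair p A (C ∪ D) ≤ TVpair p A C + TVcond p A C D :=
  tv_subcocycle_general p hp0 A C D

end Stmt13
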